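/- For every integer n ≥ 1, the ninth power sum of the roots of the Yablonskii–Vorob'ev polynomial Q_n equals s_{n,9} = −4 n (n² − 1)(n + 2)(n² + n − 7)(3n² + 3n − 20). -/

import Mathlib

/-!
Reversing `Q_n` (substituting `z ↦ 1 / z`) turns the recurrence into an identity for the reversed
polynomials `R_n` that involves only the Euler operator `X · d/dX` and the degree
`d = n (n + 1) / 2`, and in which the derivative terms carry a factor `X ^ 3` (`reverse_step`).
As `R_n` has constant term `1`, it is invertible modulo `X ^ 10`, so the recurrence modulo `X ^ 10`
determines `R_{n+2}` from `R_n` and `R_{n+1}`. Hence it suffices that an explicit candidate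
`1 + c₃ X³ + c₆ X⁶ + c₉ X⁹`, with coefficients polynomial in `m = n (n + 1)`, satisfies the
recurrence to this order, which amounts to three polynomial identities in `n` (`trunc_step`,
`reverse_congr`).

Over `ℂ` one has `R_n = ∏ (1 - a X)` over the roots `a` of `Q_n`, so `-R_n' / R_n` is the generating
function of the power sums (`newton`), and its coefficient of `X ^ 8` is `s_{n,9}`
(`sum_pow_nine`).
-/

open Polynomial

/-- The `m`-th power sum `s_{n,m}` of the complex roots (with multiplicity)
of the polynomial `Q n`. -/
noncomputable def powerSum (Q : ℕ → Polynomial ℚ) (n m : ℕ) : ℂ :=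
  (((Q n).map (algebraMap ℚ ℂ)).roots.map (· ^ m)).sum

/-! ### The recurrence for reversed polynomials -/

/-- The Euler operator `X · d/dX`, which multiplies the coefficient of `X ^ k` by `k`. -/
noncomputable def euler {R : Type*} [CommRing R] (p : R[X]) : R[X] := X * derivative p

lemma natDegree_euler_le {R : Type*} [CommRing R] (p : R[X]) :
    (euler p).natDegree ≤ p.natDegree := by
  rw [natDegree_le_iff_coeff_eq_zero]
  intro k hk
  cases k with
  | zero => simp [euler]
  | succ k => simp [euler, coeff_X_mul, coeff_derivative, coeff_eq_zero_of_natDegree_lt hk]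

/-- Under the substitution `z ↦ 1 / z` the Euler operator becomes `d` minus itself. -/
lemma reflect_euler {R : Type*} [CommRing R] {p : R[X]} {d : ℕ} (hp : p.natDegree ≤ d) :
    reflect d (euler p) = (d : R[X]) * reflect d p - euler (reflect d p) := by
  have key : ∀ (q : R[X]) (k : ℕ), (euler q).coeff k = k * q.coeff k := by
    intro q k
    cases k with
    | zero => simp [euler]
    | succ k => simp [euler, coeff_X_mul, coeff_derivative, mul_comm]
  ext k
  rw [coeff_sub, coeff_natCast_mul, key, coeff_reflect, coeff_reflect, key]
  rcases le_or_gt k d with h | h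
  · rw [revAt_le h, Nat.cast_sub h]; ring
  · rw [revAt_eq_self_of_lt h, coeff_eq_zero_of_natDegree_lt (hp.trans_lt h)]; simp

/-- Right-hand side of the reversed recurrence, in terms of `p`, `θp`, `θ²p` for the Euler
operator `θ` and of the degree `d`; here `A` stands for `X ^ 3`. -/
def rhs {R : Type*} [CommRing R] (A d p p₁ p₂ : R) : R :=
  p ^ 2 - 4 * A * (p * p₂ - p₁ ^ 2 + p * p₁ - d * p ^ 2)

/-- The recurrence step `r * q = z p² - 4 (p p'' - p'²)` in terms of reversed polynomials. -/
lemma reverse_step {p q r : ℚ[X]} (hdeg : r.natDegree + q.natDegree = 2 * p.natDegree + 1)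
    (h : r * q = X * p ^ 2 - 4 * (p * derivative (derivative p) - (derivative p) ^ 2)) :
    r.reverse * q.reverse =
      rhs (X ^ 3) (p.natDegree : ℚ[X]) p.reverse (euler p.reverse) (euler (euler p.reverse)) := by
  -- clear the derivatives by multiplying with `X ^ 2`, so that only Euler operators remain
  have h2 : X ^ 2 * (r * q) = X ^ 3 * (p * p)
      - 1 * (C 4 * (p * (euler (euler p) - euler p) - euler p * euler p)) := by
    have : (C 4 : ℚ[X]) = 4 := rfl
    rw [h, this]
    simp only [euler, derivative_mul, derivative_X]
    ring
  set d := p.natDegree with hd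
  have e1 := natDegree_euler_le p
  have e2 := (natDegree_euler_le (euler p)).trans e1
  have h3 := congrArg (reflect (3 + (d + d))) h2
  have hsub : (euler (euler p) - euler p).natDegree ≤ d :=
    (natDegree_sub_le _ _).trans (max_le e2 e1)
  have hbr : (C 4 * (p * (euler (euler p) - euler p) - euler p * euler p)).natDegree ≤ d + d := by
    refine (natDegree_C_mul_le _ _).trans ((natDegree_sub_le _ _).trans (max_le ?_ ?_))
    · exact natDegree_mul_le_of_le le_rfl hsub
    · exact natDegree_mul_le_of_le e1 e1
  have hl : 3 + (d + d) = 2 + (r.natDegree + q.natDegree) := by omega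
  rw [reflect_sub, reflect_mul _ _ (by simp) hbr, reflect_C_mul, reflect_sub,
    reflect_mul _ _ le_rfl hsub, reflect_mul _ _ e1 e1, reflect_sub,
    reflect_euler e1, reflect_euler le_rfl,
    reflect_mul _ _ (by simp) (natDegree_mul_le_of_le le_rfl le_rfl), reflect_mul _ _ le_rfl le_rfl,
    hl, reflect_mul _ _ (by simp) (natDegree_mul_le_of_le le_rfl le_rfl),
    reflect_mul _ _ le_rfl le_rfl, reflect_monomial, reflect_monomial, reflect_one,
    revAt_le le_rfl, revAt_le le_rfl] at h3
  simp only [← reverse.eq_1, ← hd] at h3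
  have hC : (C 4 : ℚ[X]) = 4 := rfl
  have hlin : euler ((d : ℚ[X]) * reflect d p - euler (reflect d p)) =
      d * euler (reflect d p) - euler (euler (reflect d p)) := by
    simp only [euler, derivative_sub, derivative_mul, derivative_natCast, derivative_X]
    ring
  rw [hlin, hC] at h3
  have hr : reflect d p = p.reverse := rfl
  rw [hr] at h3
  simp only [rhs]
  linear_combination h3

/-- Matching coefficients of `A`, `A ^ 2`, `A ^ 3` in the reversed recurrence. -/
lemma rhs_congr {R : Type*} [CommRing R] (A d a b c a₀ b₀ c₀ a₂ b₂ c₂ : R)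
    (h1 : a₂ + a₀ = 2 * a + 4 * d)
    (h2 : b₂ + b₀ + a₂ * a₀ = 2 * b + a ^ 2 - 4 * ((12 - 2 * d) * a))
    (h3 : c₂ + c₀ + a₂ * b₀ + b₂ * a₀ =
      2 * c + 2 * a * b - 4 * ((42 - 2 * d) * b + (3 - d) * a ^ 2)) :
    A ^ 4 ∣ rhs A d (1 + a * A + b * A ^ 2 + c * A ^ 3)
        (3 * a * A + 6 * b * A ^ 2 + 9 * c * A ^ 3) (9 * a * A + 36 * b * A ^ 2 + 81 * c * A ^ 3)
      - (1 + a₂ * A + b₂ * A ^ 2 + c₂ * A ^ 3) * (1 + a₀ * A + b₀ * A ^ 2 + c₀ * A ^ 3) := by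
  refine ⟨(2 * a * c + b ^ 2) + 2 * b * c * A + c ^ 2 * A ^ 2
    - ((a₂ * c₀ + b₂ * b₀ + c₂ * a₀) + (b₂ * c₀ + c₂ * b₀) * A + c₂ * c₀ * A ^ 2)
    - 4 * ((90 * c + 18 * a * b - d * (2 * c + 2 * a * b))
      + (48 * a * c + 6 * b ^ 2 - d * (2 * a * c + b ^ 2)) * A
      + (24 * b * c - 2 * d * b * c) * A ^ 2 + (9 * c ^ 2 - d * c ^ 2) * A ^ 3), ?_⟩
  simp only [rhs]
  linear_combination (-A) * h1 - A ^ 2 * h2 - A ^ 3 * h3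

/-! ### The leading coefficients -/

/-- `s_{n,3}` as a function of `m = n (n + 1)`. -/
def s3 (m : ℚ) : ℚ := -(m * (m - 2)) / 2

/-- `s_{n,6}` as a function of `m = n (n + 1)`. -/
def s6 (m : ℚ) : ℚ := 2 * m * (m - 2) * (m - 5)

/-- `s_{n,9}` as a function of `m = n (n + 1)`. -/
def s9 (m : ℚ) : ℚ := -4 * m * (m - 2) * (m - 7) * (3 * m - 20)

/-- Coefficient of `z ^ (d - 3)` in `Q_n`, of degree `d`, obtained from the power sums by
Newton's identities. -/
def c3 (m : ℚ) : ℚ := -s3 m / 3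

/-- Coefficient of `z ^ (d - 6)` in `Q_n`, of degree `d`, obtained from the power sums by
Newton's identities. -/
def c6 (m : ℚ) : ℚ := s3 m ^ 2 / 18 - s6 m / 6

/-- Coefficient of `z ^ (d - 9)` in `Q_n`, of degree `d`, obtained from the power sums by
Newton's identities. -/
def c9 (m : ℚ) : ℚ := -s9 m / 9 + s3 m * s6 m / 18 - s3 m ^ 3 / 162

/-- The reversed `Q_n` truncated at order `10`, with `m = n (n + 1)`. -/
noncomputable def trunc (m : ℚ) : ℚ[X] :=
  1 + C (c3 m) * X ^ 3 + C (c6 m) * (X ^ 3) ^ 2 + C (c9 m) * (X ^ 3) ^ 3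

/-- The truncated polynomials satisfy the reversed recurrence modulo `X ^ 10`. -/
lemma trunc_step (n : ℕ) (d : ℕ) (hd : 2 * d = (n + 1) * (n + 2)) :
    X ^ 10 ∣ rhs (X ^ 3) (d : ℚ[X]) (trunc ((n + 1) * (n + 2)))
        (euler (trunc ((n + 1) * (n + 2)))) (euler (euler (trunc ((n + 1) * (n + 2)))))
      - trunc ((n + 2) * (n + 3)) * trunc (n * (n + 1)) := by
  have hdq : (d : ℚ) = (n + 1) * (n + 2) / 2 := by
    have : (2 * d : ℚ) = (n + 1) * (n + 2) := by exact_mod_cast hd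
    linarith
  have hC2 : (C 2 : ℚ[X]) = 2 := rfl
  have hC5 : (C 5 : ℚ[X]) = 5 := rfl
  have hC8 : (C 8 : ℚ[X]) = 8 := rfl
  have hE (m : ℚ) : euler (trunc m) = 3 * C (c3 m) * X ^ 3 + 6 * C (c6 m) * (X ^ 3) ^ 2
      + 9 * C (c9 m) * (X ^ 3) ^ 3 := by
    simp [euler, trunc, ← pow_mul, hC2, hC5, hC8]
    ring
  have hEE (m : ℚ) : euler (euler (trunc m)) = 9 * C (c3 m) * X ^ 3 + 36 * C (c6 m) * (X ^ 3) ^ 2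
      + 81 * C (c9 m) * (X ^ 3) ^ 3 := by
    rw [hE]
    simp [euler, ← pow_mul, hC2, hC5, hC8]
    ring
  rw [hEE, hE]
  refine (pow_dvd_pow X (by norm_num : 10 ≤ 3 * 4)).trans ?_
  rw [pow_mul]
  have hdC : (d : ℚ[X]) = C (d : ℚ) := by simp
  rw [hdC]
  have h4 : (4 : ℚ[X]) = C 4 := rfl
  have h2 : (2 : ℚ[X]) = C 2 := rfl
  have h12 : (12 : ℚ[X]) = C 12 := rfl
  have h42 : (42 : ℚ[X]) = C 42 := rfl
  have h3 : (3 : ℚ[X]) = C 3 := rfl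
  refine rhs_congr _ _ _ _ _ _ _ _ _ _ _ ?_ ?_ ?_
  all_goals
    simp only [h4, h2, h12, h42, h3, ← C_mul, ← C_add, ← C_sub, ← C_pow]
    congr 1
    rw [hdq]
    simp only [c3, c6, c9, s3, s6, s9]
    ring

/-- `X ^ k` can be cancelled against a factor with constant term `1`. -/
lemma dvd_of_dvd_mul {K : Type*} [Field K] {k : ℕ} {p q : K[X]} (hq : q.coeff 0 = 1)
    (h : X ^ k ∣ p * q) : X ^ k ∣ p := by
  refine prime_X.pow_dvd_of_dvd_mul_right k ?_ h
  rw [X_dvd_iff, hq]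
  exact one_ne_zero

/-- `rhs` respects congruence modulo `X ^ 10`, because the Euler operator preserves the ideal
generated by `X ^ 10`. -/
lemma rhs_dvd (d : ℕ) {p q : ℚ[X]} (h : X ^ 10 ∣ p - q) :
    X ^ 10 ∣ rhs (X ^ 3) (d : ℚ[X]) p (euler p) (euler (euler p))
      - rhs (X ^ 3) (d : ℚ[X]) q (euler q) (euler (euler q)) := by
  have he : ∀ {p q : ℚ[X]}, X ^ 10 ∣ p - q → X ^ 10 ∣ euler p - euler q := by
    rintro p q ⟨e, he⟩
    refine ⟨10 * e + euler e, ?_⟩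
    obtain rfl : p = q + X ^ 10 * e := by linear_combination he
    have hC9 : (C 9 : ℚ[X]) = 9 := rfl
    simp [euler, hC9]
    ring
  have h1 := he h
  have h2 := he h1
  simp only [← Ideal.mem_span_singleton, ← Ideal.Quotient.eq] at h h1 h2 ⊢
  simp only [rhs, map_sub, map_mul, map_add, map_pow, h, h1, h2]

/-- The term `z Q_{n+1}²` dominates the right-hand side of the recurrence, which gives both the
leading coefficient and the degree. -/
lemma monic_and_natDegree
    (Q : ℕ → ℚ[X]) (hQ0 : Q 0 = 1) (hQ1 : Q 1 = X)
    (hQrec : ∀ n : ℕ, Q (n + 2) * Q n =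
      X * (Q (n + 1)) ^ 2 -
        4 * (Q (n + 1) * derivative (derivative (Q (n + 1))) -
              (derivative (Q (n + 1))) ^ 2)) (n : ℕ) :
    (Q n).Monic ∧ 2 * (Q n).natDegree = n * (n + 1) := by
  induction n using Nat.twoStepInduction with
  | zero => simp [hQ0]
  | one => simp [hQ1, monic_X]
  | more n ih0 ih1 =>
    obtain ⟨m0, d0⟩ := ih0
    obtain ⟨m1, d1⟩ := ih1
    have h := hQrec n
    generalize Q (n + 2) = r at *
    generalize Q (n + 1) = p at *
    generalize Q n = q at *
    have hm : (X * p ^ 2).Monic := monic_X.mul (m1.pow 2)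
    have hdm : (X * p ^ 2).natDegree = 2 * p.natDegree + 1 := by
      rw [monic_X.natDegree_mul (m1.pow 2), m1.natDegree_pow, natDegree_X]; omega
    have hlt : (4 * (p * derivative (derivative p) - (derivative p) ^ 2)).natDegree
        < (X * p ^ 2).natDegree := by
      rw [hdm]
      have e1 : (derivative p).natDegree ≤ p.natDegree :=
        (natDegree_derivative_le p).trans (Nat.sub_le _ _)
      have e2 : (derivative (derivative p)).natDegree ≤ p.natDegree :=
        (natDegree_derivative_le _).trans ((Nat.sub_le _ _).trans e1)
      have : (4 * (p * derivative (derivative p) - (derivative p) ^ 2)).natDegree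
          ≤ p.natDegree + p.natDegree := by
        refine (natDegree_C_mul_le (4 : ℚ) _).trans ((natDegree_sub_le _ _).trans (max_le ?_ ?_))
        · exact natDegree_mul_le_of_le le_rfl e2
        · rw [sq]; exact natDegree_mul_le_of_le e1 e1
      omega
    have hmr : (r * q).Monic := by
      rw [h]
      exact hm.sub_of_left (degree_lt_degree hlt)
    have hr : r.Monic := m0.of_mul_monic_right hmr
    refine ⟨hr, ?_⟩
    have hd := congrArg natDegree h
    rw [natDegree_sub_eq_left_of_natDegree_lt hlt, hdm, hr.natDegree_mul m0] at hd
    nlinarith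

/-- The ten leading coefficients of `Q_n`, by two-step induction: the recurrence modulo `X ^ 10`
determines the next reversed polynomial because the previous one has constant term `1`. -/
lemma reverse_congr
    (Q : ℕ → ℚ[X]) (hQ0 : Q 0 = 1) (hQ1 : Q 1 = X)
    (hQrec : ∀ n : ℕ, Q (n + 2) * Q n =
      X * (Q (n + 1)) ^ 2 -
        4 * (Q (n + 1) * derivative (derivative (Q (n + 1))) -
              (derivative (Q (n + 1))) ^ 2)) (n : ℕ) :
    X ^ 10 ∣ (Q n).reverse - trunc (n * (n + 1)) := by
  have hdeg := monic_and_natDegree Q hQ0 hQ1 hQrec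
  induction n using Nat.twoStepInduction with
  | zero =>
    have : (1 : ℚ[X]).reverse = 1 := reverse_C 1
    simp [hQ0, trunc, c3, c6, c9, s3, s6, s9, this]
  | one =>
    have : (X : ℚ[X]).reverse = 1 := by
      rw [← one_mul (X : ℚ[X]), reverse_mul_X]; exact reverse_C 1
    norm_num [hQ1, trunc, c3, c6, c9, s3, s6, s9, this]
  | more n ih0 ih1 =>
    obtain ⟨m0, d0⟩ := hdeg n
    obtain ⟨m1, d1⟩ := hdeg (n + 1)
    obtain ⟨m2, d2⟩ := hdeg (n + 2)
    have h := reverse_step (by nlinarith) (hQrec n)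
    have hs := trunc_step n (Q (n + 1)).natDegree (by rw [d1])
    have e1 : ((n + 1 : ℕ) : ℚ) * ((n + 1 : ℕ) + 1) = (n + 1) * (n + 2) := by push_cast; ring
    have e2 : ((n + 2 : ℕ) : ℚ) * ((n + 2 : ℕ) + 1) = (n + 2) * (n + 3) := by push_cast; ring
    rw [e1] at ih1
    rw [e2]
    have hr := rhs_dvd (Q (n + 1)).natDegree ih1
    rw [← h] at hr
    refine dvd_of_dvd_mul (q := (Q n).reverse) (by rw [coeff_zero_reverse, m0]) ?_
    have := (dvd_add hr hs).sub (ih0.mul_left (trunc ((n + 2) * (n + 3))))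
    convert this using 1
    ring

/-! ### From coefficients to power sums -/

/-- Newton's identities up to order `9` for the reversed polynomial `∏ (1 - x X)`, in the form
of its logarithmic derivative. -/
lemma newton (s : Multiset ℂ) :
    X ^ 9 ∣ derivative (s.map fun x => 1 - C x * X).prod + (s.map fun x => 1 - C x * X).prod *
      ∑ k ∈ Finset.range 9, C ((s.map (· ^ (k + 1))).sum) * X ^ k := by
  induction s using Multiset.induction with
  | empty => simp
  | cons x s ih =>
    obtain ⟨e, he⟩ := ih
    simp only [Multiset.map_cons, Multiset.prod_cons, Multiset.sum_cons, C_add, add_mul,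
      Finset.sum_add_distrib]
    generalize (s.map fun x => 1 - C x * X).prod = F at *
    generalize (∑ k ∈ Finset.range 9, C ((s.map (· ^ (k + 1))).sum) * X ^ k) = W at *
    refine ⟨(1 - C x * X) * e - F * C x ^ 10, ?_⟩
    simp only [Finset.sum_range_succ, Finset.sum_range_zero, derivative_mul, derivative_sub,
      derivative_one, derivative_C, derivative_X, C_pow]
    linear_combination (1 - C x * X) * he

lemma reverse_prod_X_sub_C (s : Multiset ℂ) :
    (s.map fun x => X - C x).prod.reverse = (s.map fun x => 1 - C x * X).prod := by
  induction s using Multiset.induction with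
  | empty => simpa using reverse_C (1 : ℂ)
  | cons x s ih =>
    rw [Multiset.map_cons, Multiset.prod_cons, reverse_mul_of_domain, ih, Multiset.map_cons,
      Multiset.prod_cons]
    congr 1
    rw [reverse, natDegree_X_sub_C, reflect_sub, reflect_one_X, reflect_C, pow_one]

/-- If a product `∏ (1 - x X)` is `1 + a X³ + b X⁶ + c X⁹` modulo `X ^ 10`, then the ninth power
sum of the `x` is given by Newton's identities. -/
lemma sum_pow_nine (s : Multiset ℂ) (a b c : ℂ)
    (h : X ^ 10 ∣ (s.map fun x => 1 - C x * X).prod -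
      (1 + C a * X ^ 3 + C b * (X ^ 3) ^ 2 + C c * (X ^ 3) ^ 3)) :
    (s.map (· ^ 9)).sum = -9 * c + 9 * a * b - 3 * a ^ 3 := by
  have hn := newton s
  set F := (s.map fun x => 1 - C x * X).prod with hF
  set W := ∑ k ∈ Finset.range 9, C ((s.map (· ^ (k + 1))).sum) * (X : ℂ[X]) ^ k with hW
  -- the truncated logarithmic derivative computed from `1 + a X³ + b X⁶ + c X⁹`
  set V : ℂ[X] := C (-3 * a) * X ^ 2 + C (-6 * b + 3 * a ^ 2) * X ^ 5
    + C (-9 * c + 9 * a * b - 3 * a ^ 3) * X ^ 8 with hV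
  have hF0 : F.coeff 0 = 1 := by
    obtain ⟨e, he⟩ := h
    rw [sub_eq_iff_eq_add.mp he]
    simp [coeff_zero_eq_eval_zero]
  have hd : X ^ 9 ∣ (W - V) * F := by
    obtain ⟨e, he⟩ := h
    obtain ⟨f, hf⟩ := hn
    have hF' := sub_eq_iff_eq_add.mp he
    rw [hF'] at hf ⊢
    refine ⟨f - (10 * e + X * derivative e) - V * X * e
      - X ^ 2 * (C a * C (-9 * c + 9 * a * b - 3 * a ^ 3) + C b * C (-6 * b + 3 * a ^ 2)
          + C c * C (-3 * a))
      - X ^ 5 * (C b * C (-9 * c + 9 * a * b - 3 * a ^ 3) + C c * C (-6 * b + 3 * a ^ 2))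
      - X ^ 8 * (C c * C (-9 * c + 9 * a * b - 3 * a ^ 3)), ?_⟩
    have h3 : (C 3 : ℂ[X]) = 3 := rfl
    have h6 : (C 6 : ℂ[X]) = 6 := rfl
    have h9 : (C 9 : ℂ[X]) = 9 := rfl
    simp only [hV, derivative_add, derivative_mul, derivative_C, derivative_X_pow, derivative_one,
      ← pow_mul, C_add, C_sub, C_mul, C_neg, C_pow, h3, h6, h9, map_natCast] at hf ⊢
    push_cast at hf
    linear_combination hf
  have hk := X_pow_dvd_iff.mp (dvd_of_dvd_mul hF0 hd) 8 (by norm_num)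
  simp only [hW, hV, coeff_sub, coeff_add, coeff_C_mul, coeff_X_pow,
    Finset.sum_range_succ, Finset.sum_range_zero] at hk
  norm_num at hk
  linear_combination hk

/-- Explicit formula for the power sum `s_{n,9}` of the roots of the
Yablonskii–Vorob'ev polynomial `Q n`. -/
theorem powerSum_nine
    (Q : ℕ → Polynomial ℚ)
    (hQ0 : Q 0 = 1) (hQ1 : Q 1 = X)
    (hQrec : ∀ n : ℕ, Q (n + 2) * Q n =
      X * (Q (n + 1)) ^ 2 -
        4 * (Q (n + 1) * derivative (derivative (Q (n + 1))) -
              (derivative (Q (n + 1))) ^ 2)) :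
    ∀ n : ℕ, 1 ≤ n →
      powerSum Q n 9 =
        -4 * (n : ℂ) * ((n : ℂ) ^ 2 - 1) * ((n : ℂ) + 2) * ((n : ℂ) ^ 2 + (n : ℂ) - 7) * (3 * (n : ℂ) ^ 2 + 3 * (n : ℂ) - 20) := by
  intro n _
  have hm := (monic_and_natDegree Q hQ0 hQ1 hQrec n).1
  have h := map_dvd (mapRingHom (algebraMap ℚ ℂ)) (reverse_congr Q hQ0 hQ1 hQrec n)
  have hrev : ((Q n).map (algebraMap ℚ ℂ)).reverse = (Q n).reverse.map (algebraMap ℚ ℂ) := by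
    rw [reverse, hm.natDegree_map, reflect_map, reverse]
  have hroots := (IsAlgClosed.splits ((Q n).map (algebraMap ℚ ℂ))).eq_prod_roots_of_monic
    (hm.map _)
  have h10 : mapRingHom (algebraMap ℚ ℂ) (X ^ 10) = X ^ 10 := by simp
  rw [h10, map_sub, coe_mapRingHom, ← hrev, hroots, reverse_prod_X_sub_C] at h
  simp only [trunc, Polynomial.map_add, Polynomial.map_mul, Polynomial.map_pow, map_X, map_C,
    Polynomial.map_one] at h
  have := sum_pow_nine _ _ _ _ h
  rw [powerSum, this]
  simp only [c3, c6, c9, s3, s6, s9]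
  push_cast [eq_ratCast]
  ring
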